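/- Let μ > 0 and for T > 0 define K_{T,μ}(p) = (p²−μ)(e^{(p²−μ)/T}+1)/(e^{(p²−μ)/T}−1) for p ∈ ℝ³. Then m_μ(T) := (1/(4πμ)) ∫_{ℝ³} (1/K_{T,μ}(p) − 1/p²) dp satisfies m_μ(T) = μ^{−1/2}( ln(μ/T) + γ − 2 + ln(8/π) + o(1)) as T → 0⁺, where γ is Euler's constant. -/

import Mathlib

open MeasureTheory Real Filter

/-!
With `R = μ / T` and `p = √μ s`, the quantity `√μ * m_μ(T)` is a radial integral whose integrand is
singular, as `R → ∞`, only at `s = 1`. On `[0, √2]`, writing `s² = s + s (s - 1)` splits off a part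
that the substitution `v = R (s² - 1)`, whose range `[-R, R]` is symmetric because of the choice of
`√2`, turns into `∫₀^R tanh (v / 2) / v`. In all other terms `tanh (R (s² - 1) / 2)` may be replaced
by its limit `sign (s² - 1)`; they contribute `2 log 2 - 2`.

For the divergent part, `tanh (v / 2) / v = (1 - e^{-v}) / v - e^{-v} tanh (v / 2) / v`. The first
term integrates to `log R + γ + o(1)` because `γ = -Γ'(1)`. Expanding the second term as a geometric
series in `e^{-2v}` and integrating termwise with Frullani's formula gives the logarithm of Wallis'
product, that is `log (π / 2)`.
-/

section

open Set
open scoped Topology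

/-! ### The hyperbolic tangent -/

theorem hasDerivAt_tanh (x : ℝ) : HasDerivAt tanh (1 / cosh x ^ 2) x := by
  have h := (hasDerivAt_sinh x).div (hasDerivAt_cosh x) (cosh_pos x).ne'
  rw [← sq, ← sq, cosh_sq, add_sub_cancel_left, ← cosh_sq] at h
  exact h.congr_of_eventuallyEq (.of_forall tanh_eq_sinh_div_cosh)

theorem continuous_tanh : Continuous tanh :=
  continuous_iff_continuousAt.2 fun x ↦ (hasDerivAt_tanh x).continuousAt

theorem hasDerivAt_tanh_half : HasDerivAt (fun v ↦ tanh (v / 2)) (1 / 2) 0 := by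
  refine ((hasDerivAt_tanh (0 / 2)).comp (0 : ℝ) ((hasDerivAt_id (0 : ℝ)).div_const 2)).congr_deriv
    ?_
  norm_num

theorem tanh_half_eq (x : ℝ) : tanh (x / 2) = (1 - exp (-x)) / (1 + exp (-x)) := by
  have h : exp (-x) = exp (-(x / 2)) / exp (x / 2) := by
    rw [← exp_sub]
    ring_nf
  rw [tanh_eq, h]
  field_simp

theorem tendsto_tanh_half_atTop : Tendsto (fun x ↦ tanh (x / 2)) atTop (𝓝 1) := by
  have h := tendsto_exp_neg_atTop_nhds_zero
  have hdiv := (h.const_sub 1).div (h.const_add 1) (by norm_num)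
  rw [sub_zero, add_zero, div_one] at hdiv
  exact hdiv.congr fun x ↦ (tanh_half_eq x).symm

theorem one_sub_tanh_half_le {x : ℝ} (hx : 0 < x) : 1 - tanh (x / 2) ≤ 2 / x := by
  have hexp : exp (-x) ≤ 1 / x := by
    rw [exp_neg, ← one_div]
    exact one_div_le_one_div_of_le hx (by linarith [add_one_le_exp x])
  calc 1 - tanh (x / 2) = 2 * exp (-x) / (1 + exp (-x)) := by
        rw [tanh_half_eq]
        field_simp
        ring
    _ ≤ 2 * exp (-x) := div_le_self (by positivity) (by linarith [exp_pos (-x)])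
    _ ≤ 2 / x := by linarith [show 2 / x = 2 * (1 / x) by ring]

theorem tendsto_tanh_mul_half_atTop (x : ℝ) :
    Tendsto (fun R ↦ tanh (R * x / 2)) atTop (𝓝 (sign x)) := by
  rcases lt_trichotomy x 0 with hx | rfl | hx
  · rw [sign_of_neg hx]
    refine (tendsto_tanh_half_atTop.comp (tendsto_id.atTop_mul_const (neg_pos.2 hx))).neg.congr
      fun R ↦ ?_
    rw [Function.comp_apply, ← tanh_neg, id, mul_neg, neg_div, neg_neg]
  · simp
  · rw [sign_of_pos hx]
    exact tendsto_tanh_half_atTop.comp (tendsto_id.atTop_mul_const hx)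

theorem tendsto_integral_mul_tanh_half {α : Type*} [MeasurableSpace α] {ν : Measure α}
    {h u : α → ℝ} (hh : Integrable h ν) (hu : AEMeasurable u ν) :
    Tendsto (fun R ↦ ∫ x, h x * tanh (R * u x / 2) ∂ν) atTop (𝓝 (∫ x, h x * sign (u x) ∂ν)) := by
  refine tendsto_integral_filter_of_dominated_convergence (fun x ↦ ‖h x‖) (.of_forall fun R ↦ ?_)
    (.of_forall fun R ↦ .of_forall fun x ↦ ?_) hh.norm
    (.of_forall fun x ↦ (tendsto_tanh_mul_half_atTop (u x)).const_mul (h x))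
  · exact hh.aestronglyMeasurable.mul
      (continuous_tanh.measurable.comp_aemeasurable (by fun_prop)).aestronglyMeasurable
  · rw [norm_mul]
    exact mul_le_of_le_one_right (norm_nonneg _) (abs_tanh_lt_one _).le

/-! ### Integrals of `s / (s + 1)` and `(s² - 1)⁻¹` -/

theorem continuousOn_div_add_one : ContinuousOn (fun s : ℝ ↦ s / (s + 1)) (Ioi (-1)) :=
  continuousOn_id.div (by fun_prop) fun s hs ↦ by linarith [mem_Ioi.1 hs]

theorem intervalIntegrable_div_add_one {a b : ℝ} (ha : -1 < a) (hb : -1 < b) :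
    IntervalIntegrable (fun s ↦ s / (s + 1)) volume a b :=
  (continuousOn_div_add_one.mono (ordConnected_Ioi.uIcc_subset ha hb)).intervalIntegrable

theorem integral_div_add_one {a b : ℝ} (ha : -1 < a) (hb : -1 < b) :
    ∫ s in a..b, s / (s + 1) = b - a - log ((b + 1) / (a + 1)) := by
  have hpos {s : ℝ} (hs : s ∈ uIcc a b) : s + 1 ≠ 0 :=
    ne_of_gt (by linarith [mem_Ioi.1 (ordConnected_Ioi.uIcc_subset ha hb hs)])
  have hderiv (s : ℝ) (hs : s ∈ uIcc a b) :
      HasDerivAt (fun s ↦ s - log (s + 1)) (s / (s + 1)) s := by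
    refine ((hasDerivAt_id s).sub (((hasDerivAt_id s).add_const 1).log (hpos hs))).congr_deriv ?_
    rw [id, eq_div_iff (hpos hs), sub_mul, div_mul_cancel₀ _ (hpos hs)]
    ring
  rw [intervalIntegral.integral_eq_sub_of_hasDerivAt hderiv (intervalIntegrable_div_add_one ha hb),
    log_div (hpos right_mem_uIcc) (hpos left_mem_uIcc)]
  ring

theorem hasDerivAt_half_log_sub_one_div_add_one {x : ℝ} (hx : x ^ 2 - 1 ≠ 0) :
    HasDerivAt (fun x ↦ log ((x - 1) / (x + 1)) / 2) (x ^ 2 - 1)⁻¹ x := by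
  obtain ⟨h₁, h₂⟩ : x - 1 ≠ 0 ∧ x + 1 ≠ 0 := by
    rw [← mul_ne_zero_iff]
    convert hx using 1
    ring
  have hdiv := (((hasDerivAt_id x).sub_const 1).div ((hasDerivAt_id x).add_const 1) h₂).log
    (div_ne_zero h₁ h₂)
  refine (hdiv.div_const 2).congr_deriv ?_
  simp only [id, Pi.div_apply]
  field_simp
  ring

theorem tendsto_half_log_sub_one_div_add_one :
    Tendsto (fun x : ℝ ↦ log ((x - 1) / (x + 1)) / 2) atTop (𝓝 0) := by
  have hinv : Tendsto (fun x : ℝ ↦ 1 - 2 / (x + 1)) atTop (𝓝 1) := by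
    simpa using
      ((tendsto_atTop_add_const_right atTop (1 : ℝ) tendsto_id).const_div_atTop 2).const_sub 1
  have h := (hinv.log one_ne_zero).div_const 2
  rw [log_one, zero_div] at h
  refine h.congr' ?_
  filter_upwards [eventually_gt_atTop 0] with x hx
  congr 2
  field_simp
  ring

theorem sq_sub_one_pos {x : ℝ} (hx : 1 < x) : 0 < x ^ 2 - 1 :=
  sub_pos.2 (one_lt_pow₀ hx two_ne_zero)

theorem integrableOn_inv_sq_sub_one {a : ℝ} (ha : 1 < a) :
    IntegrableOn (fun s : ℝ ↦ (s ^ 2 - 1)⁻¹) (Ioi a) :=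
  integrableOn_Ioi_deriv_of_nonneg'
    (fun _ hx ↦ hasDerivAt_half_log_sub_one_div_add_one (sq_sub_one_pos (ha.trans_le hx)).ne')
    (fun _ hx ↦ (inv_pos.2 (sq_sub_one_pos (ha.trans hx))).le)
    tendsto_half_log_sub_one_div_add_one

theorem integral_inv_sq_sub_one {a : ℝ} (ha : 1 < a) :
    ∫ s in Ioi a, (s ^ 2 - 1)⁻¹ = log ((a + 1) / (a - 1)) / 2 := by
  rw [integral_Ioi_of_hasDerivAt_of_tendsto'
    (fun x hx ↦ hasDerivAt_half_log_sub_one_div_add_one (sq_sub_one_pos (ha.trans_le hx)).ne')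
    (integrableOn_inv_sq_sub_one ha) tendsto_half_log_sub_one_div_add_one,
    ← inv_div (a + 1), log_inv]
  ring

theorem integral_div_add_one_mul_sign {b : ℝ} (hb : 1 ≤ b) :
    ∫ s in (0 : ℝ)..b, s / (s + 1) * sign (s ^ 2 - 1) = b - 2 + 2 * log 2 - log (b + 1) := by
  have hlow : EqOn (fun s ↦ -(s / (s + 1))) (fun s ↦ s / (s + 1) * sign (s ^ 2 - 1))
      (uIoo 0 1) := fun s hs ↦ by
    rw [uIoo_of_le zero_le_one] at hs
    simp [sign_of_neg (show s ^ 2 - 1 < 0 by nlinarith [hs.1, hs.2])]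
  have hhigh : EqOn (fun s ↦ s / (s + 1)) (fun s ↦ s / (s + 1) * sign (s ^ 2 - 1))
      (uIoo 1 b) := fun s hs ↦ by
    rw [uIoo_of_le hb] at hs
    simp [sign_of_pos (sq_sub_one_pos hs.1)]
  have hint {c d : ℝ} (hc : 0 ≤ c) (hd : 0 ≤ d) :
      IntervalIntegrable (fun s ↦ s / (s + 1)) volume c d :=
    intervalIntegrable_div_add_one (by linarith) (by linarith)
  rw [← intervalIntegral.integral_add_adjacent_intervals
      ((hint le_rfl zero_le_one).neg.congr_uIoo hlow)
      ((hint zero_le_one (by linarith)).congr_uIoo hhigh),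
    ← intervalIntegral.integral_congr_uIoo hlow, ← intervalIntegral.integral_congr_uIoo hhigh,
    intervalIntegral.integral_neg, integral_div_add_one (by linarith) (by linarith),
    integral_div_add_one (by linarith) (by linarith), zero_add, div_one, one_add_one_eq_two,
    log_div (by linarith) two_ne_zero]
  ring

theorem integrableOn_inv_sq_sub_one_mul_tanh {a : ℝ} (ha : 1 < a) (R : ℝ) :
    IntegrableOn (fun s ↦ (s ^ 2 - 1)⁻¹ * tanh (R * (s ^ 2 - 1) / 2)) (Ioi a) :=
  (integrableOn_inv_sq_sub_one ha).mul_bdd (c := 1)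
    (continuous_tanh.comp (by fun_prop)).aestronglyMeasurable
    (.of_forall fun _ ↦ (abs_tanh_lt_one _).le)

theorem one_sub_tanh_mul_half_mem_Icc {R u : ℝ} (hR : 0 < R) (hu : 0 < u) :
    1 - tanh (R * u / 2) ∈ Icc 0 (2 / R * u⁻¹) := by
  refine ⟨(sub_pos.2 (tanh_lt_one _)).le, (one_sub_tanh_half_le (mul_pos hR hu)).trans_eq ?_⟩
  rw [← div_div, div_eq_mul_inv _ u]

theorem integrableOn_one_sub_tanh_mul_sq_sub_one {a R : ℝ} (ha : 1 < a) (hR : 0 < R) :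
    IntegrableOn (fun s ↦ 1 - tanh (R * (s ^ 2 - 1) / 2)) (Ioi a) := by
  refine ((integrableOn_inv_sq_sub_one ha).const_mul (2 / R)).mono'
    (continuous_const.sub (continuous_tanh.comp (by fun_prop))).aestronglyMeasurable
    ((ae_restrict_mem measurableSet_Ioi).mono fun s (hs : a < s) ↦ ?_)
  have h := one_sub_tanh_mul_half_mem_Icc hR (sq_sub_one_pos (ha.trans hs))
  rw [norm_of_nonneg h.1]
  exact h.2

theorem tendsto_integral_one_sub_tanh_mul_sq_sub_one {a : ℝ} (ha : 1 < a) :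
    Tendsto (fun R ↦ ∫ s in Ioi a, (1 - tanh (R * (s ^ 2 - 1) / 2))) atTop (𝓝 0) := by
  have hbound : Tendsto (fun R : ℝ ↦ 2 / R * ∫ s in Ioi a, (s ^ 2 - 1)⁻¹) atTop (𝓝 0) := by
    simpa using (tendsto_id.const_div_atTop (2 : ℝ)).mul_const (∫ s in Ioi a, (s ^ 2 - 1)⁻¹)
  have hmem {R s : ℝ} (hR : 0 < R) (hs : a < s) := one_sub_tanh_mul_half_mem_Icc hR
    (sq_sub_one_pos (ha.trans hs))
  refine squeeze_zero' ?_ ?_ hbound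
  · filter_upwards [eventually_gt_atTop 0] with R hR
    exact setIntegral_nonneg measurableSet_Ioi fun s hs ↦ (hmem hR hs).1
  · filter_upwards [eventually_gt_atTop 0] with R hR
    rw [← integral_const_mul]
    exact setIntegral_mono_on (integrableOn_one_sub_tanh_mul_sq_sub_one ha hR)
      ((integrableOn_inv_sq_sub_one ha).const_mul _) measurableSet_Ioi fun s hs ↦ (hmem hR hs).2

/-! ### The slope of `tanh (v / 2)` at zero -/

/-- The function `v ↦ tanh (v / 2) / v`, with value `1 / 2` at `0`, in terms of which
`1 / K_{T,μ}(p) = T⁻¹ * tanhHalfSlope ((p² - μ) / T)`. -/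
noncomputable def tanhHalfSlope : ℝ → ℝ := dslope (fun v ↦ tanh (v / 2)) 0

namespace tanhHalfSlope

@[fun_prop]
theorem continuous : Continuous tanhHalfSlope := by
  rw [← continuousOn_univ]
  exact (continuousOn_dslope univ_mem).2
    ⟨(continuous_tanh.comp (by fun_prop)).continuousOn, hasDerivAt_tanh_half.differentiableAt⟩

theorem apply_zero : tanhHalfSlope 0 = 1 / 2 := by
  rw [tanhHalfSlope, dslope_same, hasDerivAt_tanh_half.deriv]

theorem mul_apply (v : ℝ) : v * tanhHalfSlope v = tanh (v / 2) := by
  simpa [tanhHalfSlope] using sub_smul_dslope (fun v ↦ tanh (v / 2)) 0 v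

theorem mul_mul_apply (R u : ℝ) : u * (R * tanhHalfSlope (R * u)) = tanh (R * u / 2) := by
  rw [← mul_apply]
  ring

theorem apply_of_ne_zero {v : ℝ} (hv : v ≠ 0) : tanhHalfSlope v = tanh (v / 2) / v := by
  rw [← mul_apply, mul_div_cancel_left₀ _ hv]

theorem apply_neg (v : ℝ) : tanhHalfSlope (-v) = tanhHalfSlope v := by
  rcases eq_or_ne v 0 with rfl | hv
  · rw [neg_zero]
  · rw [apply_of_ne_zero hv, apply_of_ne_zero (neg_ne_zero.2 hv), neg_div, tanh_neg, neg_div_neg_eq]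

theorem one_sub_exp_neg_div_eq {v : ℝ} (hv : v ≠ 0) :
    (1 - exp (-v)) / v = (1 + exp (-v)) * tanhHalfSlope v := by
  rw [apply_of_ne_zero hv, tanh_half_eq]
  field_simp

-- `v * (exp (v / T) + 1) / (exp (v / T) - 1) = v * coth (v / (2 * T))`
theorem inv_mul_coth_eq {T : ℝ} (hT : T ≠ 0) (v : ℝ) :
    (if v = 0 then 2 * T else v * (exp (v / T) + 1) / (exp (v / T) - 1))⁻¹ =
      T⁻¹ * tanhHalfSlope (v / T) := by
  split_ifs with hv
  · rw [hv, zero_div, apply_zero, mul_inv]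
    ring
  · rw [apply_of_ne_zero (div_ne_zero hv hT), tanh_half_eq, exp_neg, inv_div]
    field_simp

theorem integral_neg_self (R : ℝ) :
    ∫ x in (-R)..R, tanhHalfSlope x = 2 * ∫ x in (0 : ℝ)..R, tanhHalfSlope x := by
  have hint (a b : ℝ) : IntervalIntegrable tanhHalfSlope volume a b :=
    continuous.intervalIntegrable a b
  have hneg : ∫ x in (-R)..0, tanhHalfSlope x = ∫ x in (0 : ℝ)..R, tanhHalfSlope x := by
    simpa [apply_neg] using
      (intervalIntegral.integral_comp_neg (a := 0) (b := R) tanhHalfSlope).symm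
  rw [← intervalIntegral.integral_add_adjacent_intervals (hint (-R) 0) (hint 0 R), hneg, two_mul]

theorem integral_comp_sq_sub_one (R : ℝ) :
    ∫ s in (0 : ℝ)..√2, s * (R * tanhHalfSlope (R * (s ^ 2 - 1))) =
      ∫ v in (0 : ℝ)..R, tanhHalfSlope v := by
  have hderiv (s : ℝ) : HasDerivAt (fun s ↦ R * (s ^ 2 - 1)) (R * (2 * s)) s := by
    simpa using ((hasDerivAt_pow 2 s).sub_const 1).const_mul R
  have hsub := intervalIntegral.integral_comp_mul_deriv (a := 0) (b := √2)
    (fun s _ ↦ hderiv s) (by fun_prop) continuous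
  have hends : R * ((0 : ℝ) ^ 2 - 1) = -R ∧ R * (√2 ^ 2 - 1) = R := by
    constructor <;> norm_num
  rw [hends.1, hends.2, integral_neg_self] at hsub
  refine mul_left_cancel₀ two_ne_zero (Eq.trans ?_ hsub)
  rw [← intervalIntegral.integral_const_mul]
  congr 1 with s
  simp only [Function.comp]
  ring

end tanhHalfSlope

/-! ### Euler's constant -/

-- Both sides are `Γ'(1)`, the left one by differentiating Euler's integral.
theorem integral_log_mul_exp_neg :
    ∫ t in Ioi (0 : ℝ), log t * exp (-t) = -eulerMascheroniConstant := by
  have hΓ : HasDerivAt Complex.GammaIntegral (-(eulerMascheroniConstant : ℂ)) 1 := by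
    refine Complex.hasDerivAt_Gamma_one.congr_of_eventuallyEq ?_
    have hre : ∀ᶠ s : ℂ in 𝓝 1, 0 < s.re :=
      (isOpen_lt continuous_const Complex.continuous_re).mem_nhds (by simp)
    filter_upwards [hre] with s hs using (Complex.Gamma_eq_integral hs).symm
  have h := (Complex.hasDerivAt_GammaIntegral (s := 1) (by simp)).unique hΓ
  simp only [sub_self, Complex.cpow_zero, one_mul] at h
  rw [← Complex.ofReal_inj, ← integral_complex_ofReal]
  push_cast
  exact_mod_cast h

theorem integrableOn_log_mul_exp_neg :
    IntegrableOn (fun t : ℝ ↦ log t * exp (-t)) (Ioi 0) := by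
  -- The Bochner integral of a non-integrable function is `0`, but this one is `-γ ≠ 0`.
  refine not_imp_comm.1 integral_undef ?_
  rw [integral_log_mul_exp_neg]
  linarith [one_half_lt_eulerMascheroniConstant]

theorem intervalIntegrable_one_sub_exp_neg_div (a b : ℝ) :
    IntervalIntegrable (fun x ↦ (1 - exp (-x)) / x) volume a b := by
  have hcont : Continuous fun x ↦ (1 + exp (-x)) * tanhHalfSlope x := by fun_prop
  refine (hcont.intervalIntegrable a b).congr_ae (ae_restrict_of_ae ?_)
  filter_upwards [Measure.ae_ne volume 0] with x hx
    using (tanhHalfSlope.one_sub_exp_neg_div_eq hx).symm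

theorem tendsto_one_sub_exp_neg_mul_log_nhdsGT_zero :
    Tendsto (fun x ↦ (1 - exp (-x)) * log x) (𝓝[>] 0) (𝓝 0) := by
  have hcont : Continuous fun x ↦ (1 + exp (-x)) * tanhHalfSlope x := by fun_prop
  have h := (hcont.tendsto 0).mono_left nhdsWithin_le_nhds |>.mul
    (tendsto_log_mul_rpow_nhdsGT_zero one_pos)
  rw [mul_zero] at h
  refine h.congr' ?_
  filter_upwards [self_mem_nhdsWithin] with x hx
  have hx : x ≠ 0 := ne_of_gt hx
  rw [← tanhHalfSlope.one_sub_exp_neg_div_eq hx, rpow_one]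
  field_simp

theorem integral_one_sub_exp_neg_div {R : ℝ} (hR : 0 < R) :
    ∫ x in (0 : ℝ)..R, (1 - exp (-x)) / x =
      (1 - exp (-R)) * log R - ∫ x in (0 : ℝ)..R, log x * exp (-x) := by
  have hint := intervalIntegrable_one_sub_exp_neg_div 0 R
  have hlog : IntervalIntegrable (fun x ↦ log x * exp (-x)) volume 0 R :=
    (intervalIntegrable_iff_integrableOn_Ioc_of_le hR.le).2
      (integrableOn_log_mul_exp_neg.mono_set Ioc_subset_Ioi_self)
  rw [eq_sub_iff_add_eq, ← intervalIntegral.integral_add hint hlog,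
    ← sub_zero ((1 - exp (-R)) * log R)]
  refine intervalIntegral.integral_eq_sub_of_hasDerivAt_of_tendsto
    (f := fun x ↦ (1 - exp (-x)) * log x) hR (fun x hx ↦ ?_) (hint.add hlog)
    tendsto_one_sub_exp_neg_mul_log_nhdsGT_zero ?_
  · refine (((hasDerivAt_neg x).exp.const_sub 1).mul
      (hasDerivAt_log hx.1.ne')).congr_deriv ?_
    ring
  · have hcont : ContinuousAt (fun x ↦ (1 - exp (-x)) * log x) R :=
      ContinuousAt.mul (by fun_prop) (continuousAt_log hR.ne')
    exact hcont.tendsto.mono_left nhdsWithin_le_nhds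

theorem tendsto_exp_neg_mul_log_atTop : Tendsto (fun x ↦ exp (-x) * log x) atTop (𝓝 0) := by
  have h := tendsto_pow_mul_exp_neg_atTop_nhds_zero 1
  refine squeeze_zero' ?_ ?_ h
  · filter_upwards [eventually_ge_atTop 1] with x hx
      using mul_nonneg (exp_pos _).le (log_nonneg hx)
  · filter_upwards [eventually_gt_atTop 0] with x hx
    rw [pow_one, mul_comm]
    gcongr
    exact log_le_self hx.le

theorem tendsto_integral_one_sub_exp_neg_div_sub_log :
    Tendsto (fun R ↦ (∫ x in (0 : ℝ)..R, (1 - exp (-x)) / x) - log R) atTop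
      (𝓝 eulerMascheroniConstant) := by
  have hlog := intervalIntegral_tendsto_integral_Ioi 0 integrableOn_log_mul_exp_neg tendsto_id
  rw [integral_log_mul_exp_neg] at hlog
  have h := tendsto_exp_neg_mul_log_atTop.neg.sub hlog
  rw [neg_zero, zero_sub, neg_neg] at h
  refine h.congr' ?_
  filter_upwards [eventually_gt_atTop 0] with R hR
  rw [integral_one_sub_exp_neg_div hR, id]
  ring

/-! ### Frullani integrals and Wallis' product -/

theorem integrableOn_exp_neg_mul_sub_div {a b : ℝ} (ha : 0 < a) (hb : 0 < b) :
    IntegrableOn (fun x ↦ (exp (-(a * x)) - exp (-(b * x))) / x) (Ioi 0) := by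
  wlog hab : a ≤ b generalizing a b
  · refine (this hb ha (le_of_not_ge hab)).neg.congr_fun (fun x _ ↦ ?_) measurableSet_Ioi
    rw [Pi.neg_apply, ← neg_div, neg_sub]
  have hdom : IntegrableOn (fun x ↦ (b - a) * exp (-a * x)) (Ioi 0) :=
    (exp_neg_integrableOn_Ioi 0 ha).const_mul _
  refine hdom.mono' (Measurable.aestronglyMeasurable (by fun_prop))
    ((ae_restrict_mem measurableSet_Ioi).mono fun x (hx : 0 < x) ↦ ?_)
  have hexp : exp (-(b * x)) ≤ exp (-(a * x)) := by gcongr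
  rw [norm_of_nonneg (div_nonneg (sub_nonneg.2 hexp) hx.le), div_le_iff₀ hx]
  calc exp (-(a * x)) - exp (-(b * x))
      = (1 - exp (-((b - a) * x))) * exp (-(a * x)) := by
        rw [sub_mul, one_mul, ← exp_add]
        ring_nf
    _ ≤ (b - a) * x * exp (-(a * x)) := by
        gcongr
        linarith [one_sub_le_exp_neg ((b - a) * x)]
    _ = (b - a) * exp (-a * x) * x := by
        rw [neg_mul]
        ring

theorem integral_exp_neg_mul_sub_div {a b : ℝ} (ha : 0 < a) (hb : 0 < b) :
    ∫ x in Ioi 0, (exp (-(a * x)) - exp (-(b * x))) / x = log (b / a) := by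
  have hcont : Continuous fun x : ℝ ↦ exp (-x) := by fun_prop
  have hzero : Tendsto (fun x : ℝ ↦ exp (-x)) (𝓝[>] 0) (𝓝 1) := by
    simpa using (hcont.tendsto 0).mono_left nhdsWithin_le_nhds
  have h := Frullani.integral_Ioi_eq (hcont.locallyIntegrable.locallyIntegrableOn _) ha hb
    hzero tendsto_exp_neg_atTop_nhds_zero
  simp only [smul_eq_mul, inv_mul_eq_div, sub_zero, mul_one] at h
  exact h (integrableOn_exp_neg_mul_sub_div ha hb)

theorem hasSum_log_wallis :
    HasSum (fun i : ℕ ↦ log ((2 * i + 2) / (2 * i + 1)) - log ((2 * i + 3) / (2 * i + 2)))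
      (log (π / 2)) := by
  rw [hasSum_iff_tendsto_nat_of_nonneg]
  · refine (tendsto_prod_pi_div_two.log (by positivity)).congr fun n ↦ ?_
    rw [log_prod fun i _ ↦ by positivity]
    refine Finset.sum_congr rfl fun i _ ↦ ?_
    rw [log_mul (by positivity) (by positivity), sub_eq_add_neg, ← log_inv, inv_div]
  · intro i
    rw [sub_nonneg]
    gcongr 1
    rw [div_le_div_iff₀ (by positivity) (by positivity)]
    linarith

theorem exp_neg_mul_one_sub_exp_neg_sq_div_eq (c x : ℝ) :
    exp (-(c * x)) * (1 - exp (-x)) ^ 2 / x =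
      (exp (-(c * x)) - exp (-((c + 1) * x))) / x -
        (exp (-((c + 1) * x)) - exp (-((c + 2) * x))) / x := by
  have h₁ : exp (-((c + 1) * x)) = exp (-(c * x)) * exp (-x) := by
    rw [← exp_add]
    ring_nf
  have h₂ : exp (-((c + 2) * x)) = exp (-(c * x)) * exp (-x) ^ 2 := by
    rw [← exp_nat_mul, ← exp_add]
    push_cast
    ring_nf
  rw [h₁, h₂]
  ring

theorem integrableOn_exp_neg_mul_one_sub_exp_neg_sq_div {c : ℝ} (hc : 0 < c) :
    IntegrableOn (fun x ↦ exp (-(c * x)) * (1 - exp (-x)) ^ 2 / x) (Ioi 0) := by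
  simp only [exp_neg_mul_one_sub_exp_neg_sq_div_eq]
  exact (integrableOn_exp_neg_mul_sub_div hc (by positivity)).sub
    (integrableOn_exp_neg_mul_sub_div (by positivity) (by positivity))

theorem integral_exp_neg_mul_one_sub_exp_neg_sq_div {c : ℝ} (hc : 0 < c) :
    ∫ x in Ioi 0, exp (-(c * x)) * (1 - exp (-x)) ^ 2 / x =
      log ((c + 1) / c) - log ((c + 2) / (c + 1)) := by
  have h₁ : 0 < c + 1 := by positivity
  have h₂ : 0 < c + 2 := by positivity
  simp only [exp_neg_mul_one_sub_exp_neg_sq_div_eq]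
  rw [integral_sub (integrableOn_exp_neg_mul_sub_div hc h₁)
    (integrableOn_exp_neg_mul_sub_div h₁ h₂), integral_exp_neg_mul_sub_div hc h₁,
    integral_exp_neg_mul_sub_div h₁ h₂]

namespace tanhHalfSlope

theorem hasSum_exp_neg_mul {x : ℝ} (hx : 0 < x) :
    HasSum (fun i : ℕ ↦ exp (-((2 * i + 1) * x)) * (1 - exp (-x)) ^ 2 / x)
      (exp (-x) * tanhHalfSlope x) := by
  have hlt : exp (-x) < 1 := exp_lt_one_iff.2 (by linarith)
  have hsq : exp (-x) ^ 2 < 1 := pow_lt_one₀ (exp_pos _).le hlt two_ne_zero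
  have hterm (i : ℕ) : exp (-((2 * i + 1) * x)) * (1 - exp (-x)) ^ 2 / x =
      exp (-x) * (1 - exp (-x)) ^ 2 / x * (exp (-x) ^ 2) ^ i := by
    rw [← pow_mul, ← exp_nat_mul, div_mul_eq_mul_div, mul_right_comm, ← exp_add]
    push_cast
    ring_nf
  have hsum : exp (-x) * tanhHalfSlope x =
      exp (-x) * (1 - exp (-x)) ^ 2 / x * (1 - exp (-x) ^ 2)⁻¹ := by
    have h : 1 - exp (-x) ^ 2 ≠ 0 := (sub_pos.2 hsq).ne'
    rw [apply_of_ne_zero hx.ne', tanh_half_eq]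
    field_simp
    ring
  simp only [hterm, hsum]
  exact (hasSum_geometric_of_lt_one (sq_nonneg _) hsq).mul_left _

theorem integral_exp_neg_mul :
    ∫ x in Ioi 0, exp (-x) * tanhHalfSlope x = log (π / 2) := by
  set F : ℕ → ℝ → ℝ := fun i x ↦ exp (-((2 * i + 1) * x)) * (1 - exp (-x)) ^ 2 / x with hF
  have hF_int (i : ℕ) : ∫ x in Ioi 0, F i x =
      log ((2 * i + 2) / (2 * i + 1)) - log ((2 * i + 3) / (2 * i + 2)) := by
    have hc : (0 : ℝ) < 2 * i + 1 := by positivity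
    rw [hF, integral_exp_neg_mul_one_sub_exp_neg_sq_div hc]
    ring_nf
  have hF_norm (i : ℕ) : ∫ x in Ioi 0, ‖F i x‖ = ∫ x in Ioi 0, F i x :=
    setIntegral_congr_fun measurableSet_Ioi fun x (hx : 0 < x) ↦
      norm_of_nonneg (by positivity)
  have hsum := hasSum_integral_of_summable_integral_norm (F := F)
    (fun i ↦ integrableOn_exp_neg_mul_one_sub_exp_neg_sq_div (by positivity))
    (by simpa only [hF_norm, hF_int] using hasSum_log_wallis.summable)
  calc ∫ x in Ioi 0, exp (-x) * tanhHalfSlope x = ∫ x in Ioi 0, ∑' i, F i x :=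
        setIntegral_congr_fun measurableSet_Ioi fun x hx ↦ (hasSum_exp_neg_mul hx).tsum_eq.symm
    _ = log (π / 2) := hsum.unique (by simpa only [hF_int] using hasSum_log_wallis)

theorem integrableOn_exp_neg_mul : IntegrableOn (fun x ↦ exp (-x) * tanhHalfSlope x) (Ioi 0) := by
  refine not_imp_comm.1 integral_undef ?_
  rw [integral_exp_neg_mul]
  exact (log_pos (by linarith [pi_gt_three])).ne'

theorem tendsto_integral_sub_log :
    Tendsto (fun R ↦ (∫ x in (0 : ℝ)..R, tanhHalfSlope x) - log R) atTop
      (𝓝 (eulerMascheroniConstant - log (π / 2))) := by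
  have hexp := intervalIntegral_tendsto_integral_Ioi 0 integrableOn_exp_neg_mul tendsto_id
  rw [integral_exp_neg_mul] at hexp
  refine (tendsto_integral_one_sub_exp_neg_div_sub_log.sub hexp).congr fun R ↦ ?_
  have hcont : Continuous fun x ↦ exp (-x) * tanhHalfSlope x := by fun_prop
  rw [id, sub_right_comm, ← intervalIntegral.integral_sub
    (intervalIntegrable_one_sub_exp_neg_div 0 R) (hcont.intervalIntegrable 0 R)]
  congr 1
  refine intervalIntegral.integral_congr_ae ?_
  filter_upwards [Measure.ae_ne volume 0] with x hx _
  rw [one_sub_exp_neg_div_eq hx]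
  ring

end tanhHalfSlope

/-! ### The radial integral -/

/-- The radial integrand of `m_μ(T)` after the substitution `|p| = √μ * s`, with `R = μ / T`:
`m_μ(T) = (√μ)⁻¹ * ∫ s in Ioi 0, radialIntegrand (μ / T) s`. -/
noncomputable def radialIntegrand (R s : ℝ) : ℝ :=
  s ^ 2 * (R * tanhHalfSlope (R * (s ^ 2 - 1))) - 1

namespace radialIntegrand

theorem continuous (R : ℝ) : Continuous (radialIntegrand R) := by
  unfold radialIntegrand
  fun_prop

-- From `s² = s + s (s - 1)`: the first part is half the derivative of `s² - 1` times a function of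
-- `s² - 1`, and in the second one the factor `s - 1` cancels the singularity at `s = 1`.
theorem eq_of_nonneg (R : ℝ) {s : ℝ} (hs : 0 ≤ s) :
    radialIntegrand R s = s * (R * tanhHalfSlope (R * (s ^ 2 - 1))) +
      s / (s + 1) * tanh (R * (s ^ 2 - 1) / 2) - 1 := by
  rw [radialIntegrand, ← tanhHalfSlope.mul_mul_apply]
  field_simp
  ring

theorem eq_of_one_lt (R : ℝ) {s : ℝ} (hs : 1 < s) :
    radialIntegrand R s = (s ^ 2 - 1)⁻¹ * tanh (R * (s ^ 2 - 1) / 2) -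
      (1 - tanh (R * (s ^ 2 - 1) / 2)) := by
  have h : s ^ 2 - 1 ≠ 0 := (sq_sub_one_pos hs).ne'
  rw [radialIntegrand, ← tanhHalfSlope.mul_mul_apply]
  field_simp
  ring

theorem integral_zero_sqrt_two (R : ℝ) :
    ∫ s in (0 : ℝ)..√2, radialIntegrand R s = (∫ v in (0 : ℝ)..R, tanhHalfSlope v) +
      (∫ s in (0 : ℝ)..√2, s / (s + 1) * tanh (R * (s ^ 2 - 1) / 2)) - √2 := by
  have hslope : IntervalIntegrable (fun s ↦ s * (R * tanhHalfSlope (R * (s ^ 2 - 1)))) volume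
      0 √2 := Continuous.intervalIntegrable (by fun_prop) 0 √2
  have htanh : IntervalIntegrable (fun s ↦ s / (s + 1) * tanh (R * (s ^ 2 - 1) / 2)) volume
      0 √2 :=
    (intervalIntegrable_div_add_one (by norm_num) (by linarith [sqrt_nonneg 2])).mul_continuousOn
      (continuous_tanh.comp (by fun_prop)).continuousOn
  calc ∫ s in (0 : ℝ)..√2, radialIntegrand R s
      = ∫ s in (0 : ℝ)..√2, (s * (R * tanhHalfSlope (R * (s ^ 2 - 1))) +
          s / (s + 1) * tanh (R * (s ^ 2 - 1) / 2) - 1) :=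
        intervalIntegral.integral_congr fun s hs ↦
          eq_of_nonneg R (uIcc_of_le (sqrt_nonneg 2) ▸ hs).1
    _ = _ := by
        rw [intervalIntegral.integral_sub (hslope.add htanh) intervalIntegrable_const,
          intervalIntegral.integral_add hslope htanh, tanhHalfSlope.integral_comp_sq_sub_one,
          intervalIntegral.integral_const, sub_zero, smul_eq_mul, mul_one]

theorem tendsto_integral_zero_sqrt_two_sub_log :
    Tendsto (fun R ↦ (∫ s in (0 : ℝ)..√2, radialIntegrand R s) - log R) atTop
      (𝓝 (eulerMascheroniConstant - 2 + log (8 / π) - log (√2 + 1))) := by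
  have hint : IntervalIntegrable (fun s ↦ s / (s + 1)) volume 0 √2 :=
    intervalIntegrable_div_add_one (by norm_num) (by linarith [sqrt_nonneg 2])
  have htanh := tendsto_integral_mul_tanh_half hint.1
    (u := fun s ↦ s ^ 2 - 1) (Measurable.aemeasurable (by fun_prop))
  simp only [← intervalIntegral.integral_of_le (sqrt_nonneg 2)] at htanh
  rw [integral_div_add_one_mul_sign (one_le_sqrt.2 one_le_two)] at htanh
  have hlog : log (8 / π) = 2 * log 2 - log (π / 2) := by
    rw [two_mul, ← log_mul two_ne_zero two_ne_zero, ← log_div (by norm_num) (by positivity)]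
    congr 1
    field_simp
    norm_num
  convert ((tanhHalfSlope.tendsto_integral_sub_log.add htanh).sub_const √2).congr fun R ↦ ?_ using 2
  · rw [hlog]
    ring
  · rw [integral_zero_sqrt_two]
    ring

theorem integrableOn_Ioi {a R : ℝ} (ha : 1 < a) (hR : 0 < R) :
    IntegrableOn (radialIntegrand R) (Ioi a) :=
  ((integrableOn_inv_sq_sub_one_mul_tanh ha R).sub
    (integrableOn_one_sub_tanh_mul_sq_sub_one ha hR)).congr_fun
    (fun _ hs ↦ (eq_of_one_lt R (ha.trans hs)).symm) measurableSet_Ioi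

theorem tendsto_integral_Ioi {a : ℝ} (ha : 1 < a) :
    Tendsto (fun R ↦ ∫ s in Ioi a, radialIntegrand R s) atTop
      (𝓝 (log ((a + 1) / (a - 1)) / 2)) := by
  have htanh := tendsto_integral_mul_tanh_half (integrableOn_inv_sq_sub_one ha)
    (u := fun s ↦ s ^ 2 - 1) (Measurable.aemeasurable (by fun_prop))
  have hsign : ∫ s in Ioi a, (s ^ 2 - 1)⁻¹ * sign (s ^ 2 - 1) = ∫ s in Ioi a, (s ^ 2 - 1)⁻¹ :=
    setIntegral_congr_fun measurableSet_Ioi fun s (hs : a < s) ↦ by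
      simp [sign_of_pos (sq_sub_one_pos (ha.trans hs))]
  rw [hsign, integral_inv_sq_sub_one ha] at htanh
  have h := htanh.sub (tendsto_integral_one_sub_tanh_mul_sq_sub_one ha)
  rw [sub_zero] at h
  refine h.congr' ?_
  filter_upwards [eventually_gt_atTop 0] with R hR
  rw [← integral_sub (integrableOn_inv_sq_sub_one_mul_tanh ha R)
    (integrableOn_one_sub_tanh_mul_sq_sub_one ha hR)]
  exact setIntegral_congr_fun measurableSet_Ioi fun s hs ↦ (eq_of_one_lt R (ha.trans hs)).symm

theorem tendsto_integral_sub_log :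
    Tendsto (fun R ↦ (∫ s in Ioi 0, radialIntegrand R s) - log R) atTop
      (𝓝 (eulerMascheroniConstant - 2 + log (8 / π))) := by
  have hsqrt : 1 < √2 := one_lt_sqrt_two
  have hlog : log ((√2 + 1) / (√2 - 1)) / 2 = log (√2 + 1) := by
    have hsq : (√2 + 1) / (√2 - 1) = (√2 + 1) ^ 2 := by
      rw [div_eq_iff (by linarith)]
      linear_combination (-1 - √2) * sq_sqrt (zero_le_two (α := ℝ))
    rw [hsq, log_pow]
    ring
  have h := tendsto_integral_zero_sqrt_two_sub_log.add (tendsto_integral_Ioi hsqrt)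
  rw [hlog, sub_add_cancel] at h
  refine h.congr' ?_
  filter_upwards [eventually_gt_atTop 0] with R hR
  have hhigh := integrableOn_Ioi hsqrt hR
  have hlow := ((continuous R).intervalIntegrable (μ := volume) 0 √2).1
  have hIoi := hlow.union hhigh
  rw [Ioc_union_Ioi_eq_Ioi (sqrt_nonneg 2)] at hIoi
  rw [← intervalIntegral.integral_interval_add_Ioi hIoi hhigh]
  ring

end radialIntegrand

theorem integral_fun_norm_euclideanSpace_fin_three (f : ℝ → ℝ) :
    ∫ p : EuclideanSpace ℝ (Fin 3), f ‖p‖ = 4 * π * ∫ r in Ioi 0, r ^ 2 * f r := by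
  have hball : volume.real (Metric.ball (0 : EuclideanSpace ℝ (Fin 3)) 1) = π * 4 / 3 := by
    rw [Measure.real, EuclideanSpace.volume_ball_fin_three, ENNReal.ofReal_one, one_pow, one_mul,
      ENNReal.toReal_ofReal (by positivity)]
  rw [integral_fun_norm_addHaar, hball, finrank_euclideanSpace_fin]
  simp only [smul_eq_mul, nsmul_eq_mul, Nat.reduceSub, Nat.cast_ofNat]
  ring

theorem integral_tanhHalfSlope_sub_inv_eq {μ : ℝ} (hμ : 0 < μ) (T : ℝ) :
    1 / (4 * π * μ) * ∫ p : EuclideanSpace ℝ (Fin 3),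
        (T⁻¹ * tanhHalfSlope ((‖p‖ ^ 2 - μ) / T) - (‖p‖ ^ 2)⁻¹) =
      (√μ)⁻¹ * ∫ s in Ioi 0, radialIntegrand (μ / T) s := by
  set f : ℝ → ℝ := fun r ↦ T⁻¹ * tanhHalfSlope ((r ^ 2 - μ) / T) - (r ^ 2)⁻¹ with hf
  have hsqrt : 0 < √μ := sqrt_pos.2 hμ
  have hscale (s : ℝ) (hs : s ∈ Ioi 0) : (√μ * s) ^ 2 * f (√μ * s) = radialIntegrand (μ / T) s := by
    have hs : s ≠ 0 := ne_of_gt hs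
    have harg : (μ * s ^ 2 - μ) / T = μ / T * (s ^ 2 - 1) := by ring
    simp only [hf, radialIntegrand, mul_pow, sq_sqrt hμ.le, harg]
    field_simp
  have hsub := integral_comp_mul_left_Ioi (fun r ↦ r ^ 2 * f r) 0 hsqrt
  rw [setIntegral_congr_fun measurableSet_Ioi hscale, mul_zero, smul_eq_mul,
    eq_inv_mul_iff_mul_eq₀ hsqrt.ne'] at hsub
  rw [integral_fun_norm_euclideanSpace_fin_three f, ← hsub]
  field_simp
  rw [sq_sqrt hμ.le]

end

/-- Let `μ > 0` and `K_{T,μ}(p) = (p²-μ)(e^{(p²-μ)/T}+1)/(e^{(p²-μ)/T}-1)` (value `2T` on the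
Fermi sphere). Then `m_μ(T) = (4πμ)⁻¹ ∫ (K_{T,μ}(p)⁻¹ - (p²)⁻¹) dp` satisfies
`m_μ(T) = μ^{-1/2}(ln(μ/T) + γ - 2 + ln(8/π) + o(1))` as `T → 0⁺`,
where `γ` is Euler's constant. -/
theorem stmt5 (μ : ℝ) (hμ : 0 < μ) :
    ∃ err : ℝ → ℝ, Tendsto err (nhdsWithin 0 (Set.Ioi 0)) (nhds 0) ∧
      ∀ T : ℝ, 0 < T →
        (1 / (4 * π * μ)) *
          ∫ p : EuclideanSpace ℝ (Fin 3),
            ((if ‖p‖ ^ 2 = μ then 2 * T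
              else (‖p‖ ^ 2 - μ) * (Real.exp ((‖p‖ ^ 2 - μ) / T) + 1) /
                (Real.exp ((‖p‖ ^ 2 - μ) / T) - 1))⁻¹ - (‖p‖ ^ 2)⁻¹) =
        μ ^ (-(1 : ℝ) / 2) *
          (Real.log (μ / T) + Real.eulerMascheroniConstant - 2 + Real.log (8 / π) + err T) := by
  have hratio : Tendsto (fun T ↦ μ / T) (nhdsWithin 0 (Set.Ioi 0)) atTop :=
    tendsto_inv_nhdsGT_zero.const_mul_atTop hμ
  have hlim := (radialIntegrand.tendsto_integral_sub_log.comp hratio).sub_const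
    (eulerMascheroniConstant - 2 + log (8 / π))
  rw [sub_self] at hlim
  refine ⟨_, hlim, fun T hT ↦ ?_⟩
  have hK (p : EuclideanSpace ℝ (Fin 3)) :=
    tanhHalfSlope.inv_mul_coth_eq hT.ne' (‖p‖ ^ 2 - μ)
  simp only [sub_eq_zero] at hK
  have hpow : μ ^ (-(1 : ℝ) / 2) = (√μ)⁻¹ := by
    rw [neg_div, rpow_neg hμ.le, sqrt_eq_rpow]
  simp only [hK, integral_tanhHalfSlope_sub_inv_eq hμ, hpow, Function.comp_apply]
  ring
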